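/- Two-variable Toda-type recurrence: with T̃_{k,ℓ}(x,y) = det_{k×k}(g̃_{2i−j+ℓ}(x,y)) where g̃_m(x,y) = Σ_{j≥0, m+2j≥0} x^{m+2j} y^j/(j!(m+2j)!), one has, for all k ≥ 1, ℓ ∈ ℤ, and x,y ∈ ℂ: T̃_{k+1,ℓ} · T̃_{k−1,ℓ} = T̃_{k,ℓ} · ∂²T̃_{k,ℓ}/∂x∂y − (∂T̃_{k,ℓ}/∂x) · (∂T̃_{k,ℓ}/∂y), where T̃_{0,ℓ} = 1. -/

import Mathlib

open scoped Nat

/-- `g̃_m(x,y) = Σ_{j ≥ 0, m+2j ≥ 0} x^{m+2j} y^j / (j! (m+2j)!)`. -/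
noncomputable def gTilde (m : ℤ) (x y : ℂ) : ℂ :=
  ∑' j : ℕ, if 0 ≤ m + 2 * (j : ℤ) then
    x ^ (m + 2 * (j : ℤ)).toNat * y ^ j / ((j ! : ℂ) * ((m + 2 * (j : ℤ)).toNat ! : ℂ))
  else 0

/-- The two-variable tau function `T̃_{k,ℓ}(x,y) = det_{k×k}(g̃_{2i−j+ℓ}(x,y))`
(with `T̃_{0,ℓ} = 1`, the empty determinant). -/
noncomputable def tauTilde (k : ℕ) (ℓ : ℤ) (x y : ℂ) : ℂ :=
  Matrix.det (Matrix.of fun i j : Fin k => gTilde (2 * (i : ℤ) - (j : ℤ) + 1 + ℓ) x y)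

/-- The inclusion of index types selecting the single border index `a`. -/
def borderIndex (m : Type*) (a : Fin 2) : m ⊕ Unit → m ⊕ Fin 2 :=
  Sum.map id fun _ => a

/-- The difference of the two sides of the Desnanot–Jacobi identity for a matrix bordered by two
rows and two columns. -/
def desnanotJacobiDefect {m R : Type*} [Fintype m] [DecidableEq m] [CommRing R]
    (M : Matrix (m ⊕ Fin 2) (m ⊕ Fin 2) R) : R :=
  M.det * M.toBlocks₁₁.det -
    ((M.submatrix (borderIndex m 0) (borderIndex m 0)).det *
        (M.submatrix (borderIndex m 1) (borderIndex m 1)).det -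
      (M.submatrix (borderIndex m 0) (borderIndex m 1)).det *
        (M.submatrix (borderIndex m 1) (borderIndex m 0)).det)

lemma desnanotJacobiDefect_map {m R S : Type*} [Fintype m] [DecidableEq m] [CommRing R]
    [CommRing S] (f : R →+* S) (M : Matrix (m ⊕ Fin 2) (m ⊕ Fin 2) R) :
    desnanotJacobiDefect (M.map f) = f (desnanotJacobiDefect M) := by
  simp only [desnanotJacobiDefect, map_sub, map_mul, RingHom.map_det]
  rfl

lemma desnanotJacobiDefect_eq_zero_of_isUnit {m R : Type*} [Fintype m] [DecidableEq m]
    [CommRing R] (M : Matrix (m ⊕ Fin 2) (m ⊕ Fin 2) R) (h : IsUnit M.toBlocks₁₁.det) :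
    desnanotJacobiDefect M = 0 := by
  let _ : Invertible M.toBlocks₁₁ := Matrix.invertibleOfIsUnitDet _ h
  set S : Matrix (Fin 2) (Fin 2) R :=
    M.toBlocks₂₂ - M.toBlocks₂₁ * ⅟M.toBlocks₁₁ * M.toBlocks₁₂ with hS
  have hM : M.det = M.toBlocks₁₁.det * S.det := by
    conv_lhs => rw [← Matrix.fromBlocks_toBlocks M]
    exact Matrix.det_fromBlocks₁₁ _ _ _ _
  have hminor (a b : Fin 2) : (M.submatrix (borderIndex m a) (borderIndex m b)).det =
      M.toBlocks₁₁.det * S a b := by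
    have hsub : M.submatrix (borderIndex m a) (borderIndex m b) =
        Matrix.fromBlocks M.toBlocks₁₁ (M.toBlocks₁₂.submatrix id fun _ : Unit => b)
          (M.toBlocks₂₁.submatrix (fun _ : Unit => a) id)
          (M.toBlocks₂₂.submatrix (fun _ : Unit => a) fun _ : Unit => b) := by
      ext (i | i) (j | j) <;> rfl
    rw [hsub, Matrix.det_fromBlocks₁₁, Matrix.det_unique (n := Unit)]
    rfl
  rw [desnanotJacobiDefect, hM, hminor, hminor, hminor, hminor, Matrix.det_fin_two]
  ring

/-- The Desnanot–Jacobi identity. -/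
lemma desnanotJacobiDefect_eq_zero {m R : Type*} [Fintype m] [DecidableEq m] [CommRing R]
    [IsDomain R] (M : Matrix (m ⊕ Fin 2) (m ⊕ Fin 2) R) : desnanotJacobiDefect M = 0 := by
  let N : Matrix (m ⊕ Fin 2) (m ⊕ Fin 2) (Polynomial R) :=
    Matrix.fromBlocks (Matrix.charmatrix (-M.toBlocks₁₁)) (M.toBlocks₁₂.map Polynomial.C)
      (M.toBlocks₂₁.map Polynomial.C) (M.toBlocks₂₂.map Polynomial.C)
  have hN : desnanotJacobiDefect N = 0 := by
    refine IsFractionRing.injective (Polynomial R) (FractionRing (Polynomial R)) ?_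
    rw [map_zero, ← desnanotJacobiDefect_map]
    refine desnanotJacobiDefect_eq_zero_of_isUnit _ (isUnit_iff_ne_zero.mpr ?_)
    have hblock : (N.map (algebraMap (Polynomial R) (FractionRing (Polynomial R)))).toBlocks₁₁.det =
        algebraMap _ _ (-M.toBlocks₁₁).charpoly := by
      rw [Matrix.charpoly, RingHom.map_det]
      rfl
    rw [hblock, Ne, IsFractionRing.to_map_eq_zero_iff]
    exact (Matrix.charpoly_monic _).ne_zero
  have heval : N.map (Polynomial.evalRingHom 0) = M := by
    ext (i | i) (j | j)
    · by_cases hij : i = j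
      · subst hij
        simp [N, Matrix.charmatrix_apply_eq, Matrix.toBlocks₁₁]
      · simp [N, Matrix.charmatrix_apply_ne _ _ _ hij, Matrix.toBlocks₁₁]
    all_goals simp [N, Matrix.toBlocks₁₂, Matrix.toBlocks₂₁, Matrix.toBlocks₂₂]
  rw [← heval, desnanotJacobiDefect_map, hN, map_zero]

/-- The Desnanot–Jacobi identity for the last two rows and columns of an array indexed by `ℤ`. -/
lemma det_mul_det_eq_minors {R : Type*} [CommRing R] [IsDomain R] (n : ℕ) (a : ℤ → ℤ → R) :
    (Matrix.of fun i j : Fin (n + 2) => a i j).det * (Matrix.of fun i j : Fin n => a i j).det =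
      (Matrix.of fun i j : Fin (n + 1) => a i j).det *
          (Matrix.of fun i j : Fin (n + 1) =>
            a (Function.update (fun i : Fin (n + 1) => (i : ℤ)) (Fin.last n) (n + 1) i)
              (Function.update (fun i : Fin (n + 1) => (i : ℤ)) (Fin.last n) (n + 1) j)).det -
        (Matrix.of fun i j : Fin (n + 1) =>
            a i (Function.update (fun i : Fin (n + 1) => (i : ℤ)) (Fin.last n) (n + 1) j)).det *
          (Matrix.of fun i j : Fin (n + 1) =>
            a (Function.update (fun i : Fin (n + 1) => (i : ℤ)) (Fin.last n) (n + 1) i) j).det := by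
  let idx : Fin n ⊕ Fin 2 → ℤ := Sum.elim (fun i => (i : ℤ)) fun i => n + (i : ℤ)
  let e : Fin n ⊕ Unit ≃ Fin (n + 1) :=
    (Equiv.sumCongr (Equiv.refl _) (Equiv.ofUnique Unit (Fin 1))).trans finSumFinEquiv
  have h := desnanotJacobiDefect_eq_zero (Matrix.of fun i j => a (idx i) (idx j))
  have he₀ (i) : ((e i : Fin (n + 1)) : ℤ) = idx (borderIndex (Fin n) 0 i) := by
    rcases i with i | i <;> simp [e, idx, borderIndex]
  have he₁ (i) : Function.update (fun i : Fin (n + 1) => (i : ℤ)) (Fin.last n) (n + 1) (e i) =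
      idx (borderIndex (Fin n) 1 i) := by
    rcases i with i | i
    · have : e (Sum.inl i) = i.castSucc := rfl
      rw [this, Function.update_of_ne (Fin.castSucc_lt_last i).ne]
      rfl
    · have : e (Sum.inr i) = Fin.last n := by ext; simp [e]
      rw [this]
      simp [idx, borderIndex]
  have hidx (i) : ((finSumFinEquiv i : Fin (n + 2)) : ℤ) = idx i := by
    rcases i with i | i <;> simp [idx]
  have hM : (Matrix.of fun i j : Fin (n + 2) => a i j).det =
      (Matrix.of fun i j => a (idx i) (idx j)).det := by
    rw [← Matrix.det_submatrix_equiv_self finSumFinEquiv]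
    simp only [Matrix.submatrix, Matrix.of_apply, hidx]
  rw [← sub_eq_zero, ← h, desnanotJacobiDefect, hM]
  rw [← Matrix.det_submatrix_equiv_self e, ← Matrix.det_submatrix_equiv_self e,
    ← Matrix.det_submatrix_equiv_self e, ← Matrix.det_submatrix_equiv_self e]
  simp only [Matrix.submatrix, Matrix.of_apply, he₀, he₁]
  rfl

lemma hasDerivAt_det {n : Type*} [Fintype n] [DecidableEq n] {A : ℂ → Matrix n n ℂ}
    {A' : Matrix n n ℂ} {t : ℂ} (h : ∀ i j, HasDerivAt (fun s => A s i j) (A' i j) t) :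
    HasDerivAt (fun s => (A s).det) (∑ j, ((A t).updateCol j fun i => A' i j).det) t := by
  simp only [Matrix.det_apply]
  rw [Finset.sum_comm]
  refine HasDerivAt.fun_sum fun σ _ => ?_
  rw [← Finset.smul_sum]
  refine HasDerivAt.fun_const_smul _ ?_
  refine (HasDerivAt.fun_finsetProd fun j _ => h (σ j) j).congr_deriv ?_
  refine Finset.sum_congr rfl fun j _ => ?_
  rw [← Finset.prod_erase_mul _ _ (Finset.mem_univ j), smul_eq_mul]
  congr 1
  · refine Finset.prod_congr rfl fun i hi => ?_
    rw [Matrix.updateCol_ne (Finset.ne_of_mem_erase hi)]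
  · simp

/-- If differentiating each entry amounts to moving one column to the right, then differentiating
the determinant amounts to replacing the last column. -/
lemma hasDerivAt_det_shift {n : ℕ} {a : ℤ → Fin (n + 1) → ℂ → ℂ} {t : ℂ}
    (h : ∀ j i, HasDerivAt (a j i) (a (j + 1) i t) t) :
    HasDerivAt (fun s => (Matrix.of fun i j : Fin (n + 1) => a j i s).det)
      (Matrix.of fun i j : Fin (n + 1) =>
        a (Function.update (fun i : Fin (n + 1) => (i : ℤ)) (Fin.last n) (n + 1) j) i t).det t := by
  refine (hasDerivAt_det (A := fun s => Matrix.of fun i j : Fin (n + 1) => a j i s)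
    (A' := Matrix.of fun i j : Fin (n + 1) => a (j + 1) i t)
    fun i j => h j i).congr_deriv ?_
  rw [Finset.sum_eq_single (Fin.last n)]
  · congr 1
    ext i j
    by_cases hj : j = Fin.last n
    · subst hj
      simp
    · simp [Matrix.updateCol_ne hj, Function.update_of_ne hj]
  · intro j _ hj
    obtain ⟨j, rfl⟩ := Fin.exists_castSucc_eq.mpr hj
    refine Matrix.det_zero_of_column_eq (Fin.castSucc_lt_succ (i := j)).ne fun i => ?_
    rw [Matrix.updateCol_self, Matrix.updateCol_ne (Fin.castSucc_lt_succ (i := j)).ne']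
    simp
  · simp

/-- The divided power `z ^ n / n!`, extended by zero to negative exponents. -/
noncomputable def dividedPow (n : ℤ) (z : ℂ) : ℂ :=
  if 0 ≤ n then z ^ n.toNat / (n.toNat ! : ℂ) else 0

lemma dividedPow_natCast (n : ℕ) (z : ℂ) : dividedPow n z = z ^ n / (n ! : ℂ) := by
  simp [dividedPow]

lemma dividedPow_of_neg {n : ℤ} (hn : n < 0) (z : ℂ) : dividedPow n z = 0 :=
  if_neg hn.not_ge

lemma hasDerivAt_dividedPow (n : ℤ) (z : ℂ) :
    HasDerivAt (dividedPow n) (dividedPow (n - 1) z) z := by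
  rcases lt_or_ge n 0 with hn | hn
  · rw [dividedPow_of_neg (by lia), funext (dividedPow_of_neg hn)]
    exact hasDerivAt_const _ _
  · lift n to ℕ using hn
    rw [funext (dividedPow_natCast n)]
    rcases n with _ | n
    · rw [dividedPow_of_neg (by simp)]
      simpa using hasDerivAt_const z (1 : ℂ)
    · refine ((hasDerivAt_pow (n + 1) z).div_const _).congr_deriv ?_
      rw [show ((n + 1 : ℕ) : ℤ) - 1 = n by simp, dividedPow_natCast, Nat.factorial_succ]
      have : (n ! : ℂ) ≠ 0 := mod_cast n.factorial_ne_zero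
      have : (n + 1 : ℂ) ≠ 0 := mod_cast n.succ_ne_zero
      push_cast
      field_simp

lemma norm_dividedPow_natCast_le (n : ℕ) {z : ℂ} {r : ℝ} (hz : ‖z‖ ≤ r) :
    ‖dividedPow n z‖ ≤ r ^ n / n ! := by
  rw [dividedPow_natCast, norm_div, norm_pow, Complex.norm_natCast]
  gcongr

lemma norm_dividedPow_le (n : ℤ) {z : ℂ} {r : ℝ} (hz : ‖z‖ ≤ r) :
    ‖dividedPow n z‖ ≤ Real.exp r := by
  rcases lt_or_ge n 0 with hn | hn
  · rw [dividedPow_of_neg hn, norm_zero]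
    positivity
  · lift n to ℕ using hn
    exact (norm_dividedPow_natCast_le n hz).trans
      (Real.pow_div_factorial_le_exp _ ((norm_nonneg z).trans hz) n)

lemma gTilde_eq_tsum (m : ℤ) (x y : ℂ) :
    gTilde m x y = ∑' j : ℕ, dividedPow (m + 2 * j) x * dividedPow j y := by
  refine tsum_congr fun j => ?_
  rw [dividedPow_natCast, dividedPow]
  split_ifs
  · rw [div_mul_div_comm, mul_comm (j ! : ℂ)]
  · simp

lemma norm_dividedPow_mul_le (n : ℤ) (j : ℕ) {x y : ℂ} {r s : ℝ} (hx : ‖x‖ ≤ r) (hy : ‖y‖ ≤ s) :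
    ‖dividedPow n x * dividedPow j y‖ ≤ Real.exp r * (s ^ j / j !) := by
  rw [norm_mul]
  gcongr
  · exact norm_dividedPow_le n hx
  · exact norm_dividedPow_natCast_le j hy

lemma summable_exp_mul (r s : ℝ) : Summable fun j : ℕ => Real.exp r * (s ^ j / j !) :=
  (Real.summable_pow_div_factorial s).mul_left _

lemma summable_gTilde (m : ℤ) (x y : ℂ) :
    Summable fun j : ℕ => dividedPow (m + 2 * j) x * dividedPow j y :=
  .of_norm_bounded (summable_exp_mul ‖x‖ ‖y‖) fun j => norm_dividedPow_mul_le _ j le_rfl le_rfl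

lemma hasDerivAt_gTilde_left (m : ℤ) (x y : ℂ) :
    HasDerivAt (fun z => gTilde m z y) (gTilde (m - 1) x y) x := by
  simp only [gTilde_eq_tsum]
  have hx : x ∈ Metric.ball (0 : ℂ) (‖x‖ + 1) := by simp
  refine hasDerivAt_tsum_of_isPreconnected
    (g := fun (j : ℕ) z => dividedPow (m + 2 * j) z * dividedPow j y)
    (g' := fun (j : ℕ) z => dividedPow (m - 1 + 2 * j) z * dividedPow j y)
    (summable_exp_mul (‖x‖ + 1) ‖y‖) Metric.isOpen_ball
    (convex_ball _ _).isPreconnected (fun j z _ => ?_) (fun j z hz => ?_) hx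
    (summable_gTilde m x y) hx
  · simp only [show m - 1 + 2 * (j : ℤ) = m + 2 * j - 1 by ring]
    exact (hasDerivAt_dividedPow _ z).mul_const _
  · exact norm_dividedPow_mul_le _ j (mem_ball_zero_iff.mp hz).le le_rfl

lemma hasDerivAt_gTilde_right (m : ℤ) (x y : ℂ) :
    HasDerivAt (fun z => gTilde m x z) (gTilde (m + 2) x y) y := by
  simp only [gTilde_eq_tsum]
  have hy : y ∈ Metric.ball (0 : ℂ) (‖y‖ + 1) := by simp
  let f (z : ℂ) (j : ℕ) : ℂ := dividedPow (m + 2 * j) x * dividedPow ((j : ℤ) - 1) z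
  have hsucc (z : ℂ) (j : ℕ) :
      f z (j + 1) = dividedPow (m + 2 + 2 * j) x * dividedPow j z := by
    simp only [f]
    congr 2 <;> push_cast <;> ring
  have hzero (z : ℂ) : f z 0 = 0 := by simp [f, dividedPow_of_neg]
  have hsum : Summable (f y) := by
    rw [← summable_nat_add_iff 1]
    simpa only [hsucc] using summable_gTilde (m + 2) x y
  have htsum : ∑' j, f y j = ∑' j : ℕ, dividedPow (m + 2 + 2 * j) x * dividedPow j y := by
    rw [hsum.tsum_eq_zero_add, hzero, zero_add]
    exact tsum_congr (hsucc y)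
  rw [← htsum]
  let u (j : ℕ) : ℝ := Real.exp ‖x‖ * ((‖y‖ + 1) ^ (j - 1) / (j - 1)!)
  have hu : Summable u := by
    rw [← summable_nat_add_iff 1]
    exact summable_exp_mul _ _
  refine hasDerivAt_tsum_of_isPreconnected (g' := fun j z => f z j) hu Metric.isOpen_ball
    (convex_ball _ _).isPreconnected (fun j z _ => ?_) (fun j z hz => ?_) hy
    (summable_gTilde m x y) hy
  · exact (hasDerivAt_dividedPow _ z).const_mul _
  · rcases j with _ | j
    · rw [hzero, norm_zero]
      positivity
    · rw [hsucc]
      exact norm_dividedPow_mul_le _ j le_rfl (mem_ball_zero_iff.mp hz).le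

/-- Two-variable Toda-type recurrence: for all `k ≥ 1`, `ℓ ∈ ℤ`, `x, y ∈ ℂ`:
`T̃_{k+1,ℓ} T̃_{k−1,ℓ} = T̃_{k,ℓ} ∂²T̃_{k,ℓ}/∂x∂y − (∂T̃_{k,ℓ}/∂x)(∂T̃_{k,ℓ}/∂y)`. -/
theorem tauTilde_toda (k : ℕ) (hk : 1 ≤ k) (ℓ : ℤ) (x y : ℂ) :
    tauTilde (k + 1) ℓ x y * tauTilde (k - 1) ℓ x y
      = tauTilde k ℓ x y *
          deriv (fun x' => deriv (fun y' => tauTilde k ℓ x' y') y) x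
        - deriv (fun x' => tauTilde k ℓ x' y) x * deriv (fun y' => tauTilde k ℓ x y') y := by
  obtain ⟨n, rfl⟩ : ∃ n, k = n + 1 := ⟨k - 1, by lia⟩
  let r (i : Fin (n + 1)) : ℤ := i
  let r' : Fin (n + 1) → ℤ := Function.update r (Fin.last n) (n + 1)
  have hx (p : Fin (n + 1) → ℤ) (x : ℂ) : HasDerivAt
      (fun z => (Matrix.of fun i j : Fin (n + 1) => gTilde (2 * p i - r j + 1 + ℓ) z y).det)
      (Matrix.of fun i j : Fin (n + 1) => gTilde (2 * p i - r' j + 1 + ℓ) x y).det x := by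
    refine hasDerivAt_det_shift (a := fun j i z => gTilde (2 * p i - j + 1 + ℓ) z y) fun j i => ?_
    convert hasDerivAt_gTilde_left _ x y using 2
    ring
  have hy (x : ℂ) : HasDerivAt (fun z => tauTilde (n + 1) ℓ x z)
      (Matrix.of fun i j : Fin (n + 1) => gTilde (2 * r' i - r j + 1 + ℓ) x y).det y := by
    simp only [tauTilde]
    simp_rw [← Matrix.det_transpose (Matrix.of _)]
    refine hasDerivAt_det_shift (n := n)
      (a := fun i j z => gTilde (2 * i - r j + 1 + ℓ) x z) fun i j => ?_
    convert hasDerivAt_gTilde_right _ x y using 2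
    ring
  rw [funext fun x => (hy x).deriv, (hy x).deriv, (hx r' x).deriv,
    show deriv (fun z => tauTilde (n + 1) ℓ z y) x = _ from (hx r x).deriv]
  exact det_mul_det_eq_minors n fun i j => gTilde (2 * i - j + 1 + ℓ) x y
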